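/- Let X and Y be real normed linear spaces with X strictly convex, reflexive and complete, and let T : X → Y be a compact bounded linear operator that is left symmetric in the operator space with ‖T‖ = 1. If M_T ≠ ∅, then the range of T is one-dimensional, i.e., there exist a unit vector w ∈ Y and a continuous linear functional f on X with ‖f‖ = 1 such that Tx = f(x)·w for all x ∈ X. -/

import Mathlib

open Filter Topology Set

/-- Birkhoff–James orthogonality: `x ⊥_B y` iff `‖x + t • y‖ ≥ ‖x‖` for all real `t`.
For bounded linear operators this is orthogonality in the operator norm. -/
def BJOrth {E : Type*} [NormedAddCommGroup E] [NormedSpace ℝ E] (x y : E) : Prop :=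
  ∀ t : ℝ, ‖x‖ ≤ ‖x + t • y‖

/-- A point `x` is left symmetric if `x ⊥_B y` implies `y ⊥_B x` for all `y`. -/
def LeftSymPt {E : Type*} [NormedAddCommGroup E] [NormedSpace ℝ E] (x : E) : Prop :=
  ∀ y : E, BJOrth x y → BJOrth y x

/-- A point `x` is right symmetric if `y ⊥_B x` implies `x ⊥_B y` for all `y`. -/
def RightSymPt {E : Type*} [NormedAddCommGroup E] [NormedSpace ℝ E] (x : E) : Prop :=
  ∀ y : E, BJOrth y x → BJOrth x y

/-- A unit vector `x` is a smooth point if it has a unique norming functional. -/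
def SmoothPt {E : Type*} [NormedAddCommGroup E] [NormedSpace ℝ E] (x : E) : Prop :=
  ∃! f : E →L[ℝ] ℝ, ‖f‖ = 1 ∧ f x = 1

/-- A normed space is reflexive if the canonical embedding into the double dual is surjective. -/
def ReflexiveSp (E : Type*) [NormedAddCommGroup E] [NormedSpace ℝ E] : Prop :=
  Function.Surjective (NormedSpace.inclusionInDoubleDual ℝ E)

/-- The Kadets–Klee property: weak convergence of a sequence together with convergence of norms
implies norm convergence. -/
def KadetsKlee (E : Type*) [NormedAddCommGroup E] [NormedSpace ℝ E] : Prop :=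
  ∀ (x : ℕ → E) (x₀ : E),
    (∀ f : E →L[ℝ] ℝ, Tendsto (fun n => f (x n)) atTop (nhds (f x₀))) →
    Tendsto (fun n => ‖x n‖) atTop (nhds ‖x₀‖) →
    Tendsto (fun n => ‖x n - x₀‖) atTop (nhds 0)

/-- The norm attaining set `M_T` of a bounded linear operator. -/
def normAttain {X Y : Type*} [NormedAddCommGroup X] [NormedSpace ℝ X]
    [NormedAddCommGroup Y] [NormedSpace ℝ Y] (T : X →L[ℝ] Y) : Set X :=
  {x | ‖x‖ = 1 ∧ ‖T x‖ = ‖T‖}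

/-- `inPlus u v` means `v ∈ u⁺`, i.e. `‖u + t • v‖ ≥ ‖u‖` for all `t ≥ 0`. -/
def inPlus {E : Type*} [NormedAddCommGroup E] [NormedSpace ℝ E] (u v : E) : Prop :=
  ∀ t : ℝ, 0 ≤ t → ‖u‖ ≤ ‖u + t • v‖

/-- `inMinus u v` means `v ∈ u⁻`, i.e. `‖u + t • v‖ ≥ ‖u‖` for all `t ≤ 0`. -/
def inMinus {E : Type*} [NormedAddCommGroup E] [NormedSpace ℝ E] (u v : E) : Prop :=
  ∀ t : ℝ, t ≤ 0 → ‖u‖ ≤ ‖u + t • v‖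

/-!
Let `T` attain its norm at `x₀`. If `x ⊥_B x₀` then some norming functional `g` of `x` kills `x₀`,
so the rank one operator `g ⊗ T x` vanishes at `x₀` and `T ⊥_B g ⊗ T x`. By left symmetry
`g ⊗ T x ⊥_B T`. For compact operators on a reflexive space, orthogonality (even one-sided) is
witnessed at a point where the first operator attains its norm; by strict convexity `g ⊗ T x`
does so only at `± x / ‖x‖`, where its value is a nonnegative multiple of that of `T`. This is
impossible unless `T x = 0`. Since every vector is a multiple of `x₀` plus a vector orthogonal to
`x₀`, the range of `T` is spanned by `T x₀`.
-/

section WeakTopology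

theorem continuousOn_comp_toWeakSpace_symm_of_isCompactOperator {𝕜 X Y : Type*}
    [NontriviallyNormedField 𝕜] [SeminormedAddCommGroup X] [NormedSpace 𝕜 X] [AddCommGroup Y]
    [Module 𝕜 Y] [TopologicalSpace Y] [ContinuousConstSMul 𝕜 Y] [SeparatingDual 𝕜 Y]
    {T : X →L[𝕜] Y} (hT : IsCompactOperator T) {S : Set X} (hS : Bornology.IsBounded S) :
    ContinuousOn (T ∘ (toWeakSpace 𝕜 X).symm) ((toWeakSpace 𝕜 X).symm ⁻¹' S) := by
  obtain ⟨K, hK, hKS⟩ := hT.image_subset_compact_of_bounded (f := (T : X →ₗ[𝕜] Y)) hS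
  refine fun x _ => hK.tendsto_nhds_of_unique_mapClusterPt
    (eventually_mem_nhdsWithin.mono fun z hz => hKS (mem_image_of_mem T hz)) fun y _ hy => ?_
  have hweak : Tendsto (WeakSpace.map T) (𝓝[(toWeakSpace 𝕜 X).symm ⁻¹' S] x)
      (𝓝 (WeakSpace.map T x)) :=
    (WeakSpace.map T).continuous.continuousWithinAt
  have hcluster : MapClusterPt (toWeakSpace 𝕜 Y y) (𝓝[(toWeakSpace 𝕜 X).symm ⁻¹' S] x)
      (WeakSpace.map T) :=
    hy.continuousAt_comp (toWeakSpaceCLM 𝕜 Y).continuous.continuousAt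
  exact (toWeakSpace 𝕜 Y).injective
    (eq_of_nhds_neBot (hcluster.neBot.mono (inf_le_inf_left _ hweak)))

theorem ReflexiveSp.isCompact_weak_closedBall {X : Type*} [NormedAddCommGroup X] [NormedSpace ℝ X]
    (hX : ReflexiveSp X) (r : ℝ) :
    IsCompact ((toWeakSpace ℝ X).symm ⁻¹' Metric.closedBall 0 r) := by
  have hball : (toWeakSpace ℝ X).symm ⁻¹' Metric.closedBall 0 r =
      NormedSpace.inclusionInDoubleDualWeak ℝ X ⁻¹'
        (WeakDual.toStrongDual ⁻¹' Metric.closedBall 0 r) := by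
    ext x
    rw [mem_preimage, mem_preimage, mem_preimage, mem_closedBall_zero_iff,
      ← (NormedSpace.inclusionInDoubleDualLi ℝ).norm_map]
    exact (mem_closedBall_zero_iff (E := StrongDual ℝ (StrongDual ℝ X))).symm
  rw [hball]
  refine (NormedSpace.isEmbedding_inclusionInDoubleDualWeak ℝ X).isCompact_preimage'
    (WeakDual.isCompact_closedBall 0 r) fun φ _ => ?_
  obtain ⟨x, hx⟩ := hX (WeakDual.toStrongDual φ)
  exact ⟨toWeakSpace ℝ X x, hx⟩

end WeakTopology

theorem isCompactOperator_smulRight {𝕜 X Y : Type*} [NontriviallyNormedField 𝕜]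
    [LocallyCompactSpace 𝕜] [AddCommGroup X] [Module 𝕜 X] [TopologicalSpace X] [AddCommGroup Y]
    [Module 𝕜 Y] [TopologicalSpace Y] [ContinuousSMul 𝕜 Y] (g : X →L[𝕜] 𝕜) (y : Y) :
    IsCompactOperator (g.smulRight y) := by
  have hid : IsCompactOperator (id : 𝕜 → 𝕜) := exists_compact_mem_nhds 0
  exact (hid.clm_comp (ContinuousLinearMap.toSpanSingleton 𝕜 y)).comp_clm g

theorem exists_eq_smulRight_of_forall_mem_span_singleton {𝕜 X Y : Type*} [Field 𝕜]
    [TopologicalSpace 𝕜] [IsTopologicalRing 𝕜] [AddCommGroup X] [Module 𝕜 X] [TopologicalSpace X]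
    [AddCommGroup Y] [Module 𝕜 Y] [TopologicalSpace Y] [ContinuousSMul 𝕜 Y] [SeparatingDual 𝕜 Y]
    {T : X →L[𝕜] Y} {y : Y} (hT : ∀ x, T x ∈ 𝕜 ∙ y) : ∃ f : X →L[𝕜] 𝕜, T = f.smulRight y := by
  rcases eq_or_ne y 0 with rfl | hy
  · exact ⟨0, by ext x; simpa using hT x⟩
  obtain ⟨φ, hφ⟩ := SeparatingDual.exists_eq_one (R := 𝕜) hy
  refine ⟨φ.comp T, ContinuousLinearMap.ext fun x => ?_⟩
  obtain ⟨a, ha⟩ := Submodule.mem_span_singleton.1 (hT x)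
  simp [← ha, hφ]

section BirkhoffJames

variable {E : Type*} [NormedAddCommGroup E] [NormedSpace ℝ E]

theorem le_norm_add_smul_of_le {u v : E} {c s t : ℝ} (hu : ‖u‖ ≤ c) (hs : 0 < s) (hst : s ≤ t)
    (hc : c ≤ ‖u + s • v‖) : c ≤ ‖u + t • v‖ := by
  rcases hst.eq_or_lt with rfl | hst
  · exact hc
  have hconv : ConvexOn ℝ univ fun r : ℝ => ‖u + r • v‖ := by
    simpa [Function.comp_def, AffineMap.lineMap_apply, add_comm] using!
      (convexOn_univ_norm (E := E)).comp_affineMap (AffineMap.lineMap u (u + v))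
  exact hc.trans (hconv.le_right_of_left_le'' (mem_univ 0) (mem_univ t) hs hst.le
    (by simpa using hu.trans hc))

theorem BJOrth.inPlus_neg {x y : E} (h : BJOrth x y) : inPlus x (-y) := fun t _ => by
  simpa using h (-t)

theorem exists_bjOrth_add_smul (x z : E) : ∃ a : ℝ, BJOrth (x + a • z) z := by
  rcases eq_or_ne z 0 with rfl | hz
  · exact ⟨0, fun t => by simp⟩
  have hcoercive : Tendsto (fun a : ℝ => ‖x + a • z‖) (cocompact ℝ) atTop := by
    refine tendsto_atTop_mono (fun a => ?_) (tendsto_atTop_add_const_right _ (-‖x‖)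
      (tendsto_norm_cocompact_atTop.atTop_mul_const (norm_pos_iff.2 hz)))
    rw [← norm_smul, ← sub_eq_add_neg, add_comm x]
    exact norm_sub_le_norm_add _ _
  obtain ⟨a, ha⟩ := Continuous.exists_forall_le (by fun_prop) hcoercive
  exact ⟨a, fun t => by simpa only [add_smul, add_assoc] using ha (a + t)⟩

theorem BJOrth.norm_mkQL_span_singleton {x z : E} (h : BJOrth x z) :
    ‖(ℝ ∙ z).mkQL x‖ = ‖x‖ := by
  refine (Submodule.Quotient.norm_mk_le _ x).antisymm
    (QuotientAddGroup.le_norm_iff.2 fun m hm => ?_)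
  obtain ⟨t, ht⟩ := Submodule.mem_span_singleton.1 ((Submodule.Quotient.eq (ℝ ∙ z)).1 hm)
  simpa [ht] using h t

theorem BJOrth.exists_dual_vector_apply_eq_zero {x z : E} (h : BJOrth x z) (hx : x ≠ 0) :
    ∃ g : E →L[ℝ] ℝ, ‖g‖ = 1 ∧ g x = ‖x‖ ∧ g z = 0 := by
  have : IsClosed ((ℝ ∙ z : Submodule ℝ E) : Set E) := (ℝ ∙ z).closed_of_finiteDimensional
  obtain ⟨φ, hφ, hφx⟩ := exists_dual_vector ℝ ((ℝ ∙ z).mkQL x)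
    (by rwa [h.norm_mkQL_span_singleton, norm_ne_zero_iff])
  have hgx : φ.comp (ℝ ∙ z).mkQL x = ‖x‖ := by
    rw [ContinuousLinearMap.comp_apply, hφx, h.norm_mkQL_span_singleton]; rfl
  refine ⟨φ.comp (ℝ ∙ z).mkQL, le_antisymm ?_ ?_, hgx, ?_⟩
  · refine ContinuousLinearMap.opNorm_le_bound _ zero_le_one fun y => ?_
    exact (φ.le_of_opNorm_le hφ.le _).trans (by simpa using Submodule.Quotient.norm_mk_le (ℝ ∙ z) y)
  · have hle := (φ.comp (ℝ ∙ z).mkQL).le_opNorm x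
    rw [hgx, norm_norm] at hle
    exact one_le_of_le_mul_right₀ (norm_pos_iff.2 hx) hle
  · have hz : (ℝ ∙ z).mkQL z = 0 :=
      (Submodule.Quotient.mk_eq_zero _).2 (Submodule.mem_span_singleton_self z)
    rw [ContinuousLinearMap.comp_apply, hz, map_zero]

end BirkhoffJames

theorem apply_smul_comm_of_abs_apply_eq {X : Type*} [NormedAddCommGroup X] [NormedSpace ℝ X]
    [StrictConvexSpace ℝ X] {g : X →L[ℝ] ℝ} {u v : X} (hu : |g u| = ‖g‖ * ‖u‖)
    (hv : |g v| = ‖g‖ * ‖v‖) : g v • u = g u • v := by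
  wlog hgu : 0 ≤ g u generalizing u
  · simpa using this (u := -u) (by simpa using hu) (by simpa using (not_le.1 hgu).le)
  wlog hgv : 0 ≤ g v generalizing v
  · simpa using this (v := -v) (by simpa using hv) (by simpa using (not_le.1 hgv).le)
  rw [abs_of_nonneg hgu] at hu
  rw [abs_of_nonneg hgv] at hv
  rcases eq_or_ne g 0 with rfl | hg
  · simp
  have hray : SameRay ℝ u v := by
    refine sameRay_iff_norm_add.2 (le_antisymm (norm_add_le u v) ?_)
    refine le_of_mul_le_mul_left ?_ (norm_pos_iff.2 hg)
    calc ‖g‖ * (‖u‖ + ‖v‖) = g (u + v) := by rw [map_add, hu, hv, mul_add]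
      _ ≤ ‖g‖ * ‖u + v‖ := (le_abs_self _).trans (g.le_opNorm _)
  rw [hu, hv, mul_smul, mul_smul, hray.norm_smul_eq]

section Operators

variable {X Y : Type*} [NormedAddCommGroup X] [NormedSpace ℝ X] [NormedAddCommGroup Y]
  [NormedSpace ℝ Y]

theorem bjOrth_of_mem_normAttain {T A : X →L[ℝ] Y} {x : X} (hx : x ∈ normAttain T)
    (h : BJOrth (T x) (A x)) : BJOrth T A := fun t =>
  calc ‖T‖ = ‖T x‖ := hx.2.symm
    _ ≤ ‖(T + t • A) x‖ := h t
    _ ≤ ‖T + t • A‖ := (T + t • A).unit_le_opNorm x hx.1.le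

theorem ReflexiveSp.exists_norm_le_one_norm_apply_eq (hX : ReflexiveSp X) {T : X →L[ℝ] Y}
    (hT : IsCompactOperator T) : ∃ x, ‖x‖ ≤ 1 ∧ ‖T x‖ = ‖T‖ := by
  obtain ⟨x, hx, hmax⟩ := (hX.isCompact_weak_closedBall 1).exists_isMaxOn ⟨0, by simp⟩
    (continuousOn_comp_toWeakSpace_symm_of_isCompactOperator hT Metric.isBounded_closedBall).norm
  rw [mem_preimage, mem_closedBall_zero_iff] at hx
  refine ⟨(toWeakSpace ℝ X).symm x, hx, (T.unit_le_opNorm _ hx).antisymm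
    (T.opNorm_le_of_unit_norm (norm_nonneg _) fun z hz => ?_)⟩
  simpa using hmax (a := toWeakSpace ℝ X z) (by simp [hz])

theorem norm_apply_eq_and_inPlus_of_forall_pos {A B : X →L[ℝ] Y} {x : X} (hx : ‖x‖ ≤ 1)
    (h : ∀ t : ℝ, 0 < t → ‖A‖ ≤ ‖(A + t • B) x‖) : ‖A x‖ = ‖A‖ ∧ inPlus (A x) (B x) := by
  have hlim : Tendsto (fun t : ℝ => ‖(A + t • B) x‖) (𝓝[>] 0) (𝓝 ‖A x‖) :=
    (Continuous.tendsto' (by fun_prop) _ _ (by simp)).mono_left nhdsWithin_le_nhds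
  have hAx : ‖A x‖ = ‖A‖ :=
    (A.unit_le_opNorm x hx).antisymm (ge_of_tendsto hlim (eventually_mem_nhdsWithin.mono h))
  refine ⟨hAx, fun t ht => ?_⟩
  rcases ht.eq_or_lt with rfl | ht
  · simp
  · exact hAx.trans_le (h t ht)

theorem inPlus.exists_norm_apply_eq_and_inPlus_apply (hX : ReflexiveSp X) {A B : X →L[ℝ] Y}
    (hA : IsCompactOperator A) (hB : IsCompactOperator B) (h : inPlus A B) :
    ∃ x, ‖x‖ ≤ 1 ∧ ‖A x‖ = ‖A‖ ∧ inPlus (A x) (B x) := by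
  have hcpt (t : ℝ) : IsCompactOperator (A + t • B) := hA.add (hB.smul t)
  let ball : Set (WeakSpace ℝ X) := (toWeakSpace ℝ X).symm ⁻¹' Metric.closedBall 0 1
  have hball : IsCompact ball := hX.isCompact_weak_closedBall 1
  have norm_le {x} (hx : x ∈ ball) : ‖(toWeakSpace ℝ X).symm x‖ ≤ 1 :=
    mem_closedBall_zero_iff.1 hx
  let K (t : Ioi (0 : ℝ)) : Set (WeakSpace ℝ X) :=
    ball ∩ (fun x => ‖(A + t.1 • B) ((toWeakSpace ℝ X).symm x)‖) ⁻¹' Ici ‖A‖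
  have hclosed (t) : IsClosed (K t) :=
    (continuousOn_comp_toWeakSpace_symm_of_isCompactOperator (hcpt t)
      Metric.isBounded_closedBall).norm.preimage_isClosed_of_isClosed hball.isClosed isClosed_Ici
  have hne (t) : (K t).Nonempty := by
    obtain ⟨x, hx, hx'⟩ := hX.exists_norm_le_one_norm_apply_eq (hcpt t)
    exact ⟨toWeakSpace ℝ X x, mem_closedBall_zero_iff.2 hx, (h t t.2.le).trans_eq hx'.symm⟩
  -- A convex function of `t` that is at most `‖A‖` at `0` stays above `‖A‖` once it gets there.
  have hmono : Monotone K := fun s t hst x hx =>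
    ⟨hx.1, le_norm_add_smul_of_le (A.unit_le_opNorm _ (norm_le hx.1)) s.2 hst hx.2⟩
  obtain ⟨x, hx⟩ := IsCompact.nonempty_iInter_of_directed_nonempty_isCompact_isClosed K
    hmono.directed_ge hne
    (fun t => hball.of_isClosed_subset (hclosed t) inter_subset_left) hclosed
  rw [mem_iInter] at hx
  have hx1 := norm_le (hx ⟨1, mem_Ioi.2 one_pos⟩).1
  exact ⟨_, hx1, norm_apply_eq_and_inPlus_of_forall_pos hx1 fun t ht => (hx ⟨t, ht⟩).2⟩

theorem not_bjOrth_smulRight_apply [StrictConvexSpace ℝ X] (hX : ReflexiveSp X) {T : X →L[ℝ] Y}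
    (hT : IsCompactOperator T) {g : X →L[ℝ] ℝ} (hg : g ≠ 0) {u : X} (hgu : g u = ‖g‖ * ‖u‖)
    (hTu : T u ≠ 0) : ¬ BJOrth (g.smulRight (T u)) T := fun horth => by
  obtain ⟨v, hv, hgv, hplus⟩ := horth.inPlus_neg.exists_norm_apply_eq_and_inPlus_apply hX
    (isCompactOperator_smulRight g (T u)) hT.neg
  have hgv1 : |g v| = ‖g‖ := by
    rw [ContinuousLinearMap.smulRight_apply, ContinuousLinearMap.norm_smulRight_apply,
      norm_smul] at hgv
    exact mul_right_cancel₀ (norm_ne_zero_iff.2 hTu) hgv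
  have hgv' : |g v| = ‖g‖ * ‖v‖ := (g.le_opNorm v).antisymm
    ((mul_le_of_le_one_right (norm_nonneg g) hv).trans_eq hgv1.symm)
  have hgu' : |g u| = ‖g‖ * ‖u‖ := by rw [hgu, abs_of_nonneg (by positivity)]
  -- At the time `t = g u` the perturbation `g ⊗ T u - t T` vanishes at the witness `v`.
  have hcancel : g v • T u = g u • T v := by
    rw [← map_smul, ← map_smul, apply_smul_comm_of_abs_apply_eq hgu' hgv']
  have hnorm : ‖g v • T u‖ ≤ 0 := by
    simpa [hcancel] using hplus (g u) (by rw [hgu]; positivity)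
  have hgv0 : g v ≠ 0 := abs_ne_zero.1 (by rwa [hgv1, norm_ne_zero_iff])
  exact smul_ne_zero hgv0 hTu (norm_le_zero_iff.1 hnorm)

theorem LeftSymPt.apply_eq_zero_of_bjOrth [StrictConvexSpace ℝ X] (hX : ReflexiveSp X)
    {T : X →L[ℝ] Y} (hTsym : LeftSymPt T) (hT : IsCompactOperator T) {x₀ x : X}
    (hx₀ : x₀ ∈ normAttain T) (hx : BJOrth x x₀) : T x = 0 := by
  by_contra hTx
  have hx0 : x ≠ 0 := by rintro rfl; exact hTx (map_zero T)
  obtain ⟨g, hg, hgx, hgx₀⟩ := hx.exists_dual_vector_apply_eq_zero hx0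
  have horth : BJOrth T (g.smulRight (T x)) :=
    bjOrth_of_mem_normAttain hx₀ fun t => by simp [hgx₀]
  exact not_bjOrth_smulRight_apply hX hT (norm_ne_zero_iff.1 (by simp [hg]))
    (by rw [hgx, hg, one_mul]) hTx (hTsym _ horth)

theorem LeftSymPt.apply_mem_span_singleton [StrictConvexSpace ℝ X] (hX : ReflexiveSp X)
    {T : X →L[ℝ] Y} (hTsym : LeftSymPt T) (hT : IsCompactOperator T) {x₀ : X}
    (hx₀ : x₀ ∈ normAttain T) (x : X) : T x ∈ ℝ ∙ T x₀ := by
  obtain ⟨a, ha⟩ := exists_bjOrth_add_smul x x₀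
  have hzero := hTsym.apply_eq_zero_of_bjOrth hX hT hx₀ ha
  rw [map_add, map_smul] at hzero
  exact Submodule.mem_span_singleton.2 ⟨-a, by rw [neg_smul, eq_neg_of_add_eq_zero_left hzero]⟩

end Operators

theorem left_symmetric_compact_operator_is_rank_one
    {X Y : Type*} [NormedAddCommGroup X] [NormedSpace ℝ X]
    [StrictConvexSpace ℝ X] [CompleteSpace X]
    [NormedAddCommGroup Y] [NormedSpace ℝ Y]
    (hrefl : ReflexiveSp X)
    (T : X →L[ℝ] Y) (hTcpt : IsCompactOperator T)
    (hTsym : LeftSymPt T) (hTnorm : ‖T‖ = 1)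
    (hMT : (normAttain T).Nonempty) :
    ∃ (w : Y) (f : X →L[ℝ] ℝ), ‖w‖ = 1 ∧ ‖f‖ = 1 ∧ ∀ x : X, T x = f x • w := by
  obtain ⟨x₀, hx₀⟩ := hMT
  have hw : ‖T x₀‖ = 1 := hx₀.2.trans hTnorm
  obtain ⟨f, hTf⟩ := exists_eq_smulRight_of_forall_mem_span_singleton
    (hTsym.apply_mem_span_singleton hrefl hTcpt hx₀)
  have hf : ‖f‖ = 1 := by
    rw [← hTnorm, hTf, ContinuousLinearMap.norm_smulRight_apply, hw, mul_one]
  exact ⟨T x₀, f, hw, hf, DFunLike.congr_fun hTf⟩
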